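/- arXiv:2507.04728 — 2 statements merged into one kernel-verified Lean document; each statement's English description precedes it below -/
import Mathlib

section
/- Let G~ be a mixed graph with underlying graph G. Then r(G~) ≥ 2m(G) − 2κ(G), i.e., the H-rank of a mixed graph is at least twice the matching number of its underlying graph minus twice the number of even cycles of the underlying graph. -/
open scoped Classical

namespace MixedPaper

universe u

/-- A mixed graph: a finite simple graph together with an orientation of a subset
of its edges.  `arc u v = true` means there is an arc from `u` to `v`. -/
structure MixedGraph (V : Type u) where
  graph : SimpleGraph V
  arc : V → V → Bool
  arc_adj : ∀ u v, arc u v → graph.Adj u v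
  arc_antisymm : ∀ u v, arc u v → ¬ arc v u

variable {V : Type u}

/-- The Hermitian adjacency matrix of a mixed graph. -/
noncomputable def MixedGraph.hMatrix [Fintype V] [DecidableEq V] (M : MixedGraph V) :
    Matrix V V ℂ := fun u v =>
  if M.arc u v then Complex.I
  else if M.arc v u then -Complex.I
  else if M.graph.Adj u v then 1 else 0

/-- The H-rank of a mixed graph: the rank of its Hermitian adjacency matrix. -/
noncomputable def MixedGraph.hRank [Fintype V] [DecidableEq V] (M : MixedGraph V) : ℕ :=
  M.hMatrix.rank

/-- The matching number of a simple graph. -/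
noncomputable def matchingNumber (G : SimpleGraph V) : ℕ :=
  sSup {k | ∃ N : G.Subgraph, N.IsMatching ∧ N.edgeSet.ncard = k}

/-- A subgraph is a cycle subgraph if it is connected and every one of its vertices
has exactly two neighbours in it. -/
def IsCycleSubgraph {G : SimpleGraph V} (C : G.Subgraph) : Prop :=
  C.Connected ∧ ∀ v ∈ C.verts, {w | C.Adj v w}.ncard = 2

/-- κ(G) : the number of even cycles of G. -/
noncomputable def evenCycleCount (G : SimpleGraph V) : ℕ :=
  {C : G.Subgraph | IsCycleSubgraph C ∧ Even C.verts.ncard}.ncard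

/-- c(G) = |E(G)| - |V(G)| + ω(G), the cyclomatic number. -/
noncomputable def cyclomatic [Fintype V] (G : SimpleGraph V) : ℤ :=
  (G.edgeSet.ncard : ℤ) - (Fintype.card V : ℤ) + (Nat.card G.ConnectedComponent : ℤ)

/-- The induced mixed subgraph on a set of vertices. -/
def MixedGraph.induce (M : MixedGraph V) (S : Set V) : MixedGraph S where
  graph := M.graph.induce S
  arc := fun a b => M.arc a.1 b.1
  arc_adj := fun a b h => M.arc_adj a.1 b.1 h
  arc_antisymm := fun a b h => M.arc_antisymm a.1 b.1 h

/-- The mixed subgraph induced by a connected component of the underlying graph. -/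
def MixedGraph.comp (M : MixedGraph V) (c : M.graph.ConnectedComponent) :
    MixedGraph c.supp := M.induce c.supp

/-- The signature |f - b| of a closed walk in a mixed graph: the absolute difference
between the numbers of forward and backward arcs along the walk. -/
def walkSignature (M : MixedGraph V) {u : V} (w : M.graph.Walk u u) : ℕ :=
  ((w.darts.countP fun d => M.arc d.toProd.1 d.toProd.2 : ℤ) -
    (w.darts.countP fun d => M.arc d.toProd.2 d.toProd.1 : ℤ)).natAbs

/-- The signature of the cycle subgraph `C` of the mixed graph `M` satisfies the
predicate `P` (expressed via a closed walk traversing `C`; the signature does not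
depend on the choice of traversal). -/
def CycleSig (M : MixedGraph V) (C : M.graph.Subgraph) (P : ℕ → Prop) : Prop :=
  ∃ (u : V) (w : M.graph.Walk u u), w.IsCycle ∧
    {v | v ∈ w.support} = C.verts ∧ {e | e ∈ w.edges} = C.edgeSet ∧
    P (walkSignature M w)

/-- `C` is a pendant cycle with unique vertex `x` of degree 3. -/
def IsPendantCycle (G : SimpleGraph V) (C : G.Subgraph) (x : V) : Prop :=
  IsCycleSubgraph C ∧ x ∈ C.verts ∧ {w | G.Adj x w}.ncard = 3 ∧
    ∀ v ∈ C.verts, v ≠ x → {w | G.Adj v w}.ncard = 2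

/-- G has no pendant vertices (vertices of degree 1). -/
def NoPendantVerts (G : SimpleGraph V) : Prop := ∀ u : V, {w | G.Adj u w}.ncard ≠ 1

/-- The (distinct) cycles of G are pairwise vertex-disjoint. -/
def CyclesVertexDisjoint (G : SimpleGraph V) : Prop :=
  ∀ C₁ C₂ : G.Subgraph, IsCycleSubgraph C₁ → IsCycleSubgraph C₂ → C₁ ≠ C₂ →
    Disjoint C₁.verts C₂.verts

/-- The (distinct) even cycles of G are pairwise vertex-disjoint. -/
def EvenCyclesVertexDisjoint (G : SimpleGraph V) : Prop :=
  ∀ C₁ C₂ : G.Subgraph, IsCycleSubgraph C₁ → IsCycleSubgraph C₂ →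
    Even C₁.verts.ncard → Even C₂.verts.ncard → C₁ ≠ C₂ →
    Disjoint C₁.verts C₂.verts

/-- One pendant `K₂` deletion step, recorded on the surviving vertex sets:
`u` is pendant in the graph induced on `S` with unique neighbour `v` there,
and both are deleted. -/
def PendantStep (G : SimpleGraph V) (S T : Set V) : Prop :=
  ∃ u v, u ∈ S ∧ v ∈ S ∧ {w | w ∈ S ∧ G.Adj u w} = {v} ∧ T = S \ {u, v}

/-- `S` is reachable from the full vertex set by a sequence of pendant K₂ deletions. -/
def PendantReaches (G : SimpleGraph V) (S : Set V) : Prop :=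
  Relation.ReflTransGen (PendantStep G) Set.univ S

/-- The graph induced on `S` has no pendant vertices. -/
def NoPendantIn (G : SimpleGraph V) (S : Set V) : Prop :=
  ∀ u ∈ S, {w | w ∈ S ∧ G.Adj u w}.ncard ≠ 1

/-- `u` lies on some even cycle of `G`. -/
def OnEvenCycle (G : SimpleGraph V) (u : V) : Prop :=
  ∃ C : G.Subgraph, IsCycleSubgraph C ∧ Even C.verts.ncard ∧ u ∈ C.verts

/-- G is the graph ∞(p,1,q): two cycles of lengths p and q sharing exactly one vertex. -/
def IsInfinityGraph (G : SimpleGraph V) (p q : ℕ) : Prop :=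
  ∃ C₁ C₂ : G.Subgraph, IsCycleSubgraph C₁ ∧ IsCycleSubgraph C₂ ∧
    C₁.verts.ncard = p ∧ C₂.verts.ncard = q ∧
    (C₁.verts ∩ C₂.verts).ncard = 1 ∧ C₁ ⊔ C₂ = ⊤

/-- G is the theta graph θ(p,l,q): three internally disjoint paths with p, l, q
vertices respectively, joining two common endvertices. -/
def IsThetaGraph (G : SimpleGraph V) (p l q : ℕ) : Prop :=
  2 ≤ p ∧ 2 ≤ l ∧ 2 ≤ q ∧ ¬(p = 2 ∧ l = 2) ∧ ¬(p = 2 ∧ q = 2) ∧ ¬(l = 2 ∧ q = 2) ∧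
  ∃ (a b : V) (W₁ W₂ W₃ : G.Walk a b), W₁.IsPath ∧ W₂.IsPath ∧ W₃.IsPath ∧
    W₁.length = p - 1 ∧ W₂.length = l - 1 ∧ W₃.length = q - 1 ∧
    (∀ v : V, v ∈ W₁.support ∨ v ∈ W₂.support ∨ v ∈ W₃.support) ∧
    (∀ e ∈ G.edgeSet, e ∈ W₁.edges ∨ e ∈ W₂.edges ∨ e ∈ W₃.edges) ∧
    {v | v ∈ W₁.support ∧ v ∈ W₂.support} = {a, b} ∧
    {v | v ∈ W₁.support ∧ v ∈ W₃.support} = {a, b} ∧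
    {v | v ∈ W₂.support ∧ v ∈ W₃.support} = {a, b}

/-- Every odd cycle of `M` has signature satisfying `P`. -/
def OddCyclesSig (M : MixedGraph V) (P : ℕ → Prop) : Prop :=
  ∀ C : M.graph.Subgraph, IsCycleSubgraph C → Odd C.verts.ncard → CycleSig M C P

/-- Every even cycle of `M`, of length `n`, has signature `s` satisfying `P n s`. -/
def EvenCyclesSig (M : MixedGraph V) (P : ℕ → ℕ → Prop) : Prop :=
  ∀ C : M.graph.Subgraph, IsCycleSubgraph C → Even C.verts.ncard →
    CycleSig M C (P C.verts.ncard)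

/-- The whole mixed graph is a single cycle. -/
def IsCycleMG (M : MixedGraph V) : Prop := IsCycleSubgraph (⊤ : M.graph.Subgraph)

/-- The family 𝔊₀. -/
def MemG0 [Fintype V] [DecidableEq V] (M : MixedGraph V) : Prop :=
  M.graph.Connected ∧ 1 ≤ cyclomatic M.graph ∧ CyclesVertexDisjoint M.graph ∧
  NoPendantVerts M.graph ∧
  ∃ (C : M.graph.Subgraph) (x : V), IsPendantCycle M.graph C x ∧ Odd C.verts.ncard ∧
    CycleSig M C Odd ∧
    ((M.induce (C.vertsᶜ ∪ {x})).hRank : ℤ) =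
      2 * (matchingNumber (M.induce (C.vertsᶜ ∪ {x})).graph : ℤ) -
        2 * cyclomatic (M.induce (C.vertsᶜ ∪ {x})).graph

/-- The family 𝔛₁ : mixed ∞(p,1,q)-graphs, p even, q odd, whose odd cycle has odd
signature and whose even cycle C̃_p satisfies σ ≡ p (mod 4). -/
def MemX1 (M : MixedGraph V) : Prop :=
  ∃ p q : ℕ, Even p ∧ Odd q ∧ IsInfinityGraph M.graph p q ∧
    OddCyclesSig M Odd ∧ EvenCyclesSig M (fun n s => s % 4 = n % 4)

/-- The family 𝔛₂ : mixed θ(p,l,q)-graphs, p even, l q odd, whose two odd cycles have odd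
signatures and whose even cycle C̃_{q+l-2} satisfies q + l + σ ≡ 2 (mod 4). -/
def MemX2 (M : MixedGraph V) : Prop :=
  ∃ p l q : ℕ, Even p ∧ Odd l ∧ Odd q ∧ IsThetaGraph M.graph p l q ∧
    OddCyclesSig M Odd ∧ EvenCyclesSig M (fun _ s => (q + l + s) % 4 = 2)

/-- The family 𝔊₂ = 𝔊₀ ∪ 𝔛₁ ∪ 𝔛₂ together with the mixed odd cycles of odd signature. -/
def MemG2 [Fintype V] [DecidableEq V] (M : MixedGraph V) : Prop :=
  MemG0 M ∨ MemX1 M ∨ MemX2 M ∨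
    (IsCycleMG M ∧ Odd (Nat.card V) ∧ CycleSig M ⊤ Odd)

/-- The family 𝔜₁. -/
def MemY1 (M : MixedGraph V) : Prop :=
  ∃ p q : ℕ, Even p ∧ Odd q ∧ IsInfinityGraph M.graph p q ∧
    OddCyclesSig M Even ∧ EvenCyclesSig M (fun n s => s % 4 = n % 4)

/-- The family 𝔜₂. -/
def MemY2 (M : MixedGraph V) : Prop :=
  ∃ p l q : ℕ, Even p ∧ Odd l ∧ Odd q ∧ IsThetaGraph M.graph p l q ∧
    OddCyclesSig M Even ∧ EvenCyclesSig M (fun _ s => (q + l + s) % 4 = 2)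

/-- `M` is a disjoint union of `k` even cycles and one odd cycle with even signature. -/
def IsDisjointUnionEvenCyclesOddCycleEvenSig (M : MixedGraph V) (k : ℤ) : Prop :=
  (∀ c : M.graph.ConnectedComponent, IsCycleMG (M.comp c)) ∧
  (({c : M.graph.ConnectedComponent | Even (Nat.card c.supp)}.ncard : ℤ) = k) ∧
  (∃! c : M.graph.ConnectedComponent, Odd (Nat.card c.supp)) ∧
  (∀ c : M.graph.ConnectedComponent, Odd (Nat.card c.supp) →
    CycleSig (M.comp c) ⊤ Even)

/-- The family 𝔉₀. -/
def MemF0 [Fintype V] [DecidableEq V] (M : MixedGraph V) : Prop :=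
  M.graph.Connected ∧ 2 ≤ cyclomatic M.graph ∧ CyclesVertexDisjoint M.graph ∧
  NoPendantVerts M.graph ∧
  (∃ (C₀ : M.graph.Subgraph) (x₀ : V), IsPendantCycle M.graph C₀ x₀ ∧ Odd C₀.verts.ncard ∧
    CycleSig M C₀ Even ∧
    ∀ C : M.graph.Subgraph, IsCycleSubgraph C → C ≠ C₀ →
      Even C.verts.ncard ∧ CycleSig M C (fun s => s % 4 = C.verts.ncard % 4)) ∧
  (∃ (Cq : M.graph.Subgraph) (x : V), IsPendantCycle M.graph Cq x ∧ Even Cq.verts.ncard ∧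
    ∃ S : Set ↥(Cq.vertsᶜ ∪ {x}),
      PendantReaches (M.induce (Cq.vertsᶜ ∪ {x})).graph S ∧
      NoPendantIn (M.induce (Cq.vertsᶜ ∪ {x})).graph S ∧
      IsDisjointUnionEvenCyclesOddCycleEvenSig
        ((M.induce (Cq.vertsᶜ ∪ {x})).induce S)
        (cyclomatic (M.induce (Cq.vertsᶜ ∪ {x})).graph))

/-- The family 𝔉₂ = 𝔉₀ ∪ 𝔜₁ ∪ 𝔜₂ together with the mixed odd cycles of even signature. -/
def MemF2 [Fintype V] [DecidableEq V] (M : MixedGraph V) : Prop :=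
  MemF0 M ∨ MemY1 M ∨ MemY2 M ∨
    (IsCycleMG M ∧ Odd (Nat.card V) ∧ CycleSig M ⊤ Even)

/-- A connected component that is either an even cycle C̃_q with σ ≡ q (mod 4),
or an isolated vertex. -/
def GoodOtherComp (M : MixedGraph V) : Prop :=
  (IsCycleMG M ∧ Even (Nat.card V) ∧
    CycleSig M ⊤ (fun s => s % 4 = (Nat.card V) % 4)) ∨
  Nat.card V = 1

/-- A fractional matching of `G`, given as a weight function on `Sym2 V` vanishing
outside the edge set. -/
def IsFracMatching [Fintype V] [DecidableEq V] (G : SimpleGraph V) (f : Sym2 V → ℝ) : Prop :=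
  (∀ e ∈ G.edgeSet, 0 ≤ f e ∧ f e ≤ 1) ∧ (∀ e, e ∉ G.edgeSet → f e = 0) ∧
    ∀ v : V, ∑ e ∈ Finset.univ.filter (fun e : Sym2 V => v ∈ e), f e ≤ 1

/-- The fractional matching number m*(G). -/
noncomputable def fracMatchingNumber [Fintype V] [DecidableEq V] (G : SimpleGraph V) : ℝ :=
  sSup {x : ℝ | ∃ f : Sym2 V → ℝ, IsFracMatching G f ∧ ∑ e : Sym2 V, f e = x}

/-- Membership in the family ℱ : fractional matchings of total weight m*(G) taking
values in {0, 1/2, 1}. -/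
def InOptFamily [Fintype V] [DecidableEq V] (G : SimpleGraph V) (f : Sym2 V → ℝ) : Prop :=
  IsFracMatching G f ∧ (∑ e : Sym2 V, f e) = fracMatchingNumber G ∧
    ∀ e : Sym2 V, f e = 0 ∨ f e = 1 / 2 ∨ f e = 1

/-- An optimal fractional matching: a member of ℱ with the largest number of
edges of weight 1. -/
def IsOptFracMatching [Fintype V] [DecidableEq V] (G : SimpleGraph V) (f : Sym2 V → ℝ) : Prop :=
  InOptFamily G f ∧
    ∀ g : Sym2 V → ℝ, InOptFamily G g →
      {e : Sym2 V | g e = 1}.ncard ≤ {e : Sym2 V | f e = 1}.ncard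

/-- E₁(C) : the edges of `G` with exactly one endpoint on the cycle `C`. -/
def cutEdges (G : SimpleGraph V) (C : G.Subgraph) : Set (Sym2 V) :=
  {e | e ∈ G.edgeSet ∧ ∃ a b : V, e = s(a, b) ∧ a ∈ C.verts ∧ b ∉ C.verts}

/-!
A matching with `m` edges is an involution `σ` of `V` moving `2m` vertices along edges. If every
even cycle contains a fixed point of `σ`, then `σ` is the only such involution with its fixed
points, since two of them would alternate along an even cycle. The principal submatrix on the moved
vertices is then nonsingular: the entries of the Hermitian adjacency matrix are Gaussian integers,
nonzero modulo `1 + i` exactly on the edges, and modulo `1 + i` the determinant is a sum over the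
perfect matchings of the moved vertices only (a permutation and its inverse contribute equally, so
all others cancel in characteristic two). Hence the rank is at least `2m`. In general, pick one
vertex on each even cycle and drop the at most `κ(G)` matching edges at these vertices.
-/

open Equiv Function

section Involutions

theorem even_ncard_of_involutive {α : Type*} {s : Set α} {f : α → α} (hf : Involutive f)
    (hmaps : Set.MapsTo f s s) (hfree : ∀ a ∈ s, f a ≠ a) : Even s.ncard := by
  rcases s.finite_or_infinite with hs | hs
  · rw [Set.ncard_eq_toFinset_card s hs, ← ZMod.natCast_eq_zero_iff_even]
    have hsum : ∑ _a ∈ hs.toFinset, (1 : ZMod 2) = 0 :=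
      Finset.sum_involution (fun a _ => f a) (fun _ _ => CharTwo.add_self_eq_zero 1)
        (fun a ha _ => hfree a (hs.mem_toFinset.1 ha))
        (fun a ha => hs.mem_toFinset.2 (hmaps (hs.mem_toFinset.1 ha))) (fun a _ => hf a)
    simpa using hsum
  · simp [hs.ncard]

variable {n F : Type*} [Fintype n] [CommRing F]

theorem prod_inv_apply_of_isSymm {B : Matrix n n F} (hB : B.IsSymm) (σ : Perm n) :
    ∏ i, B (σ⁻¹ i) i = ∏ i, B (σ i) i := by
  rw [← Equiv.prod_comp σ (fun i => B (σ⁻¹ i) i)]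
  exact Finset.prod_congr rfl fun i _ => by rw [Perm.inv_def, Equiv.symm_apply_apply, hB.apply]

variable [DecidableEq n]

theorem det_eq_permanent_of_charTwo [CharP F 2] (B : Matrix n n F) : B.det = B.permanent := by
  rw [Matrix.det_apply, Matrix.permanent]
  refine Finset.sum_congr rfl fun σ _ => ?_
  rcases Int.units_eq_one_or (Perm.sign σ) with h | h
  · rw [h, one_smul]
  · rw [h, Units.neg_smul, one_smul, CharTwo.neg_eq]

theorem det_eq_sum_involutions_of_charTwo [CharP F 2] {B : Matrix n n F} (hB : B.IsSymm) :
    B.det = ∑ σ : Perm n with σ⁻¹ = σ, ∏ i, B (σ i) i := by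
  have hcancel : ∑ σ : Perm n with ¬σ⁻¹ = σ, ∏ i, B (σ i) i = 0 := by
    refine Finset.sum_involution (fun σ _ => σ⁻¹) (fun σ _ => ?_)
      (fun σ hσ _ => (Finset.mem_filter.1 hσ).2) (fun σ hσ => ?_) (fun σ _ => inv_inv σ)
    · rw [prod_inv_apply_of_isSymm hB, CharTwo.add_self_eq_zero]
    · exact Finset.mem_filter.2 ⟨Finset.mem_univ _, fun h => (Finset.mem_filter.1 hσ).2 h.symm⟩
  rw [det_eq_permanent_of_charTwo, Matrix.permanent,
    ← Finset.sum_filter_add_sum_filter_not Finset.univ (fun σ : Perm n => σ⁻¹ = σ), hcancel,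
    add_zero]

end Involutions

/-- A matching of `G`, encoded as the involution of the vertices that swaps the two ends of every
matching edge and fixes the unmatched vertices. -/
def IsMatchingPerm (G : SimpleGraph V) (σ : Perm V) : Prop :=
  σ⁻¹ = σ ∧ ∀ v, σ v ≠ v → G.Adj v (σ v)

namespace IsMatchingPerm

variable {G : SimpleGraph V} {σ : Perm V}

theorem involutive (hσ : IsMatchingPerm G σ) : Involutive σ := fun v => by
  rw [← Perm.eq_inv_iff_eq, hσ.1]

theorem ofSubtype {p : V → Prop} [DecidablePred p] {τ : Perm (Subtype p)}
    (hτ : IsMatchingPerm (G.comap (Subtype.val : Subtype p → V)) τ) :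
    IsMatchingPerm G (Perm.ofSubtype τ) := by
  refine ⟨by rw [← map_inv, hτ.1], fun v hv => ?_⟩
  by_cases hpv : p v
  · rw [Perm.ofSubtype_apply_of_mem τ hpv] at hv ⊢
    exact hτ.2 ⟨v, hpv⟩ fun h => hv (congrArg Subtype.val h)
  · exact absurd (Perm.ofSubtype_apply_of_not_mem τ hpv) hv

theorem subtypePerm (hσ : IsMatchingPerm G σ) {p : V → Prop} (hp : ∀ v, p (σ v) ↔ p v) :
    IsMatchingPerm (G.comap (Subtype.val : Subtype p → V)) (σ.subtypePerm hp) :=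
  ⟨by ext v; simp [hσ.1], fun v hv => hσ.2 v fun h => hv (Subtype.ext h)⟩

theorem exists_fixing [Finite V] (hσ : IsMatchingPerm G σ) (T : Set V) :
    ∃ τ : Perm V, IsMatchingPerm G τ ∧ T ⊆ fixedPoints τ ∧
      {v | σ v ≠ v}.ncard ≤ {v | τ v ≠ v}.ncard + 2 * T.ncard := by
  let p (v : V) : Prop := v ∉ T ∧ σ v ∉ T
  have hp : ∀ v, p (σ v) ↔ p v := fun v => by
    simp only [p, hσ.involutive v, and_comm]
  refine ⟨_, (hσ.subtypePerm hp).ofSubtype,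
    fun v hv => Perm.ofSubtype_apply_of_not_mem _ fun h => h.1 hv, ?_⟩
  set τ := Perm.ofSubtype (σ.subtypePerm hp)
  have hcover : {v | σ v ≠ v} ⊆ {v | τ v ≠ v} ∪ (T ∪ σ '' T) := fun v hv => by
    by_cases hvT : p v
    · left
      change τ v ≠ v
      rwa [Perm.ofSubtype_apply_of_mem _ hvT]
    · simp only [p, not_and_or, not_not] at hvT
      exact Or.inr (hvT.imp_right fun h => ⟨σ v, h, hσ.involutive v⟩)
  calc {v | σ v ≠ v}.ncard
      ≤ ({v | τ v ≠ v} ∪ (T ∪ σ '' T)).ncard := Set.ncard_le_ncard hcover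
    _ ≤ {v | τ v ≠ v}.ncard + (T.ncard + (σ '' T).ncard) :=
      (Set.ncard_union_le _ _).trans (Nat.add_le_add_left (Set.ncard_union_le _ _) _)
    _ = {v | τ v ≠ v}.ncard + 2 * T.ncard := by
      rw [Set.ncard_image_of_injective T σ.injective, two_mul]

end IsMatchingPerm

section AlternatingCycle

/-- One step of an alternating walk of the matchings `σ` and `τ`; at a fixed point of `σ` or `τ` the
step may stay in place. -/
def AlternatingStep (σ τ : V → V) (a b : V) : Prop := b = σ a ∨ b = τ a

theorem apply_ne_apply_of_reflTransGen {σ τ : V → V} (hσ : Involutive σ)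
    (hτ : Involutive τ) {x v : V} (hx : σ x ≠ τ x)
    (hv : Relation.ReflTransGen (AlternatingStep σ τ) x v) : σ v ≠ τ v := by
  induction hv with
  | refl => exact hx
  | @tail a b _ hstep ih =>
    rcases hstep with rfl | rfl <;> intro h <;> apply ih
    · rw [← hτ (σ a), ← h, hσ]
    · rw [← hσ (τ a), h, hτ]

variable {G : SimpleGraph V} {σ τ : Perm V} {x : V}

/-- The union of the matchings `σ` and `τ` on the set of vertices reachable from `x`; it is a cycle
if `σ` and `τ` have the same fixed points and differ at `x`. -/
def alternatingSubgraph (hσ : IsMatchingPerm G σ) (hτ : IsMatchingPerm G τ) (x : V) :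
    G.Subgraph where
  verts := {v | Relation.ReflTransGen (AlternatingStep σ τ) x v}
  Adj a b := Relation.ReflTransGen (AlternatingStep σ τ) x a ∧ a ≠ b ∧ AlternatingStep σ τ a b
  adj_sub := by
    rintro a b ⟨-, hab, rfl | rfl⟩
    · exact hσ.2 a hab.symm
    · exact hτ.2 a hab.symm
  edge_vert h := h.1
  symm := by
    refine ⟨fun a b ⟨ha, hab, hstep⟩ => ⟨ha.tail hstep, hab.symm, ?_⟩⟩
    rcases hstep with rfl | rfl
    · exact Or.inl (hσ.involutive a).symm
    · exact Or.inr (hτ.involutive a).symm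

theorem connected_alternatingSubgraph (hσ : IsMatchingPerm G σ) (hτ : IsMatchingPerm G τ) (x : V) :
    (alternatingSubgraph hσ hτ x).Connected := by
  rw [SimpleGraph.Subgraph.connected_iff', SimpleGraph.connected_iff_exists_forall_reachable]
  refine ⟨⟨x, Relation.ReflTransGen.refl⟩, fun ⟨v, hv⟩ => ?_⟩
  induction hv using Relation.ReflTransGen.rec with
  | refl => exact SimpleGraph.Reachable.refl _
  | @tail a b ha hstep ih =>
    rcases eq_or_ne a b with rfl | hab
    · exact ih
    · exact ih.trans (SimpleGraph.Adj.reachable ⟨ha, hab, hstep⟩)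

theorem apply_ne_self_of_mem_alternatingSubgraph (hσ : IsMatchingPerm G σ)
    (hτ : IsMatchingPerm G τ) (hfix : fixedPoints σ ⊆ fixedPoints τ) (hx : σ x ≠ τ x) {v : V}
    (hv : v ∈ (alternatingSubgraph hσ hτ x).verts) : σ v ≠ v := fun hσv =>
  have hτv : τ v = v := hfix hσv
  apply_ne_apply_of_reflTransGen hσ.involutive hτ.involutive hx hv (hσv.trans hτv.symm)

theorem isCycleSubgraph_alternatingSubgraph (hσ : IsMatchingPerm G σ) (hτ : IsMatchingPerm G τ)
    (hfix : fixedPoints σ = fixedPoints τ) (hx : σ x ≠ τ x) :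
    IsCycleSubgraph (alternatingSubgraph hσ hτ x) := by
  refine ⟨connected_alternatingSubgraph hσ hτ x, fun v hv => ?_⟩
  have hσv : σ v ≠ v := apply_ne_self_of_mem_alternatingSubgraph hσ hτ hfix.subset hx hv
  have hτv : τ v ≠ v := fun h => hσv (hfix.superset h)
  have hneighbors : {w | (alternatingSubgraph hσ hτ x).Adj v w} = {σ v, τ v} := by
    ext w
    refine ⟨fun h => h.2.2, fun h => ⟨hv, ?_, h⟩⟩
    rcases h with rfl | rfl
    · exact hσv.symm
    · exact hτv.symm
  rw [hneighbors, Set.ncard_pair (apply_ne_apply_of_reflTransGen hσ.involutive hτ.involutive hx hv)]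

theorem even_ncard_verts_alternatingSubgraph (hσ : IsMatchingPerm G σ) (hτ : IsMatchingPerm G τ)
    (hfix : fixedPoints σ ⊆ fixedPoints τ) (hx : σ x ≠ τ x) :
    Even (alternatingSubgraph hσ hτ x).verts.ncard :=
  even_ncard_of_involutive hσ.involutive (fun _ hv => Relation.ReflTransGen.tail hv (Or.inl rfl))
    fun _ hv => apply_ne_self_of_mem_alternatingSubgraph hσ hτ hfix hx hv

end AlternatingCycle

/-- A set of vertices meeting every even cycle of `G`. -/
def IsEvenCycleTransversal (G : SimpleGraph V) (T : Set V) : Prop :=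
  ∀ C : G.Subgraph, IsCycleSubgraph C → Even C.verts.ncard → (C.verts ∩ T).Nonempty

theorem IsEvenCycleTransversal.mono {G : SimpleGraph V} {S T : Set V}
    (hS : IsEvenCycleTransversal G S) (hST : S ⊆ T) : IsEvenCycleTransversal G T :=
  fun C hC heven => (hS C hC heven).mono (Set.inter_subset_inter_right _ hST)

theorem exists_isEvenCycleTransversal_ncard_le [Finite V] (G : SimpleGraph V) :
    ∃ T, IsEvenCycleTransversal G T ∧ T.ncard ≤ evenCycleCount G := by
  let evenCycles := {C : G.Subgraph | IsCycleSubgraph C ∧ Even C.verts.ncard}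
  let vertexOn (C : evenCycles) : V := C.2.1.1.nonempty.some
  refine ⟨Set.range vertexOn, fun C hC heven => ?_, ?_⟩
  · exact ⟨vertexOn ⟨C, hC, heven⟩, hC.1.nonempty.some_mem, Set.mem_range_self _⟩
  · exact Finite.card_range_le vertexOn

theorem IsMatchingPerm.eq_of_fixedPoints_eq {G : SimpleGraph V} {σ τ : Perm V}
    (hσ : IsMatchingPerm G σ) (hτ : IsMatchingPerm G τ) (hfix : fixedPoints σ = fixedPoints τ)
    (htrans : IsEvenCycleTransversal G (fixedPoints σ)) : σ = τ := by
  by_contra hne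
  obtain ⟨x, hx⟩ := DFunLike.ne_iff.1 hne
  obtain ⟨v, hv, hσv⟩ := htrans _ (isCycleSubgraph_alternatingSubgraph hσ hτ hfix hx)
    (even_ncard_verts_alternatingSubgraph hσ hτ hfix.subset hx)
  exact apply_ne_self_of_mem_alternatingSubgraph hσ hτ hfix.subset hx hv hσv

theorem IsMatchingPerm.eq_subtypePerm_of_adj {G : SimpleGraph V} {σ : Perm V}
    (hσ : IsMatchingPerm G σ) (htrans : IsEvenCycleTransversal G (fixedPoints σ))
    {τ : Perm {v // σ v ≠ v}} (hτ : τ⁻¹ = τ) (hadj : ∀ v, G.Adj v.1 (τ v).1) :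
    τ = σ.subtypePerm fun _ => σ.injective.ne_iff := by
  have hτG : IsMatchingPerm G (Perm.ofSubtype τ) :=
    IsMatchingPerm.ofSubtype ⟨hτ, fun v _ => hadj v⟩
  have hfix : fixedPoints σ = fixedPoints (Perm.ofSubtype τ) := by
    ext v
    by_cases hv : σ v = v
    · exact iff_of_true hv (Perm.ofSubtype_apply_of_not_mem τ (not_not.2 hv))
    · refine iff_of_false hv fun h => (hadj ⟨v, hv⟩).ne' ?_
      rwa [← Perm.ofSubtype_apply_of_mem τ hv]
  ext v
  rw [← Perm.ofSubtype_apply_coe, ← hσ.eq_of_fixedPoints_eq hτG hfix htrans,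
    Perm.subtypePerm_apply]

section MatchingNumber

theorem exists_isMatchingPerm_moved_eq_verts {G : SimpleGraph V} {N : G.Subgraph}
    (hN : N.IsMatching) : ∃ σ : Perm V, IsMatchingPerm G σ ∧ {v | σ v ≠ v} = N.verts := by
  have hpartner : ∀ v, ∃ w, N.Adj v w ∨ v ∉ N.verts ∧ w = v := fun v => by
    by_cases hv : v ∈ N.verts
    · exact (hN hv).exists.imp fun _ => Or.inl
    · exact ⟨v, Or.inr ⟨hv, rfl⟩⟩
  choose partner hpartner using hpartner
  have hinv : Involutive partner := fun v => by
    rcases hpartner v with hadj | ⟨-, hfix⟩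
    · rcases hpartner (partner v) with hadj' | ⟨hnot, -⟩
      · exact hN.eq_of_adj_left hadj' hadj.symm
      · exact absurd (N.edge_vert hadj.symm) hnot
    · rw [hfix, hfix]
  have hadj : ∀ v, partner v ≠ v → N.Adj v (partner v) := fun v hv =>
    (hpartner v).resolve_right fun h => hv h.2
  refine ⟨hinv.toPerm, ⟨hinv.toPerm_symm, fun v hv => (hadj v hv).adj_sub⟩, ?_⟩
  ext v
  refine ⟨fun hv => N.edge_vert (hadj v hv), fun hv => ?_⟩
  exact (N.adj_sub ((hpartner v).resolve_right fun h => h.1 hv)).ne'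

variable [Finite V]

theorem exists_isMatching_ncard_edgeSet_eq_matchingNumber (G : SimpleGraph V) :
    ∃ N : G.Subgraph, N.IsMatching ∧ N.edgeSet.ncard = matchingNumber G := by
  refine Nat.sSup_mem (s := {k | ∃ N : G.Subgraph, N.IsMatching ∧ N.edgeSet.ncard = k})
    ⟨_, ⊥, fun v hv => absurd hv (Set.notMem_empty v), rfl⟩ ⟨Nat.card (Sym2 V), ?_⟩
  rintro k ⟨N, -, rfl⟩
  exact Set.ncard_le_card _

theorem ncard_verts_eq_two_mul_ncard_edgeSet {G : SimpleGraph V} {N : G.Subgraph}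
    (hN : N.IsMatching) : N.verts.ncard = 2 * N.edgeSet.ncard := by
  have := Fintype.ofFinite V
  have hdegree : ∀ v, N.spanningCoe.degree v = if v ∈ N.verts then 1 else 0 := fun v => by
    split_ifs with hv
    · exact SimpleGraph.degree_eq_one_iff_existsUnique_adj.2 (hN hv)
    · exact (SimpleGraph.degree_eq_zero _ _).2 fun w hw => hv (N.edge_vert hw)
  calc N.verts.ncard = ∑ v, N.spanningCoe.degree v := by
        simp only [hdegree, Finset.sum_boole, Set.ncard_eq_toFinset_card', Nat.cast_id]
        congr 1
        ext v
        simp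
    _ = 2 * N.spanningCoe.edgeFinset.card := N.spanningCoe.sum_degrees_eq_twice_card_edges
    _ = 2 * N.edgeSet.ncard := by
        rw [← SimpleGraph.Subgraph.edgeSet_spanningCoe, ← SimpleGraph.coe_edgeFinset,
          Set.ncard_coe_finset]

end MatchingNumber

section Rank

variable [Fintype V] {G : SimpleGraph V}

theorem IsMatchingPerm.det_submatrix_ne_zero [DecidableEq V] {σ : Perm V} {F : Type*}
    [CommRing F] [IsDomain F] [CharP F 2] {B : Matrix V V F} (hB : B.IsSymm)
    (hBG : ∀ u v, B u v ≠ 0 ↔ G.Adj u v) (hσ : IsMatchingPerm G σ)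
    (htrans : IsEvenCycleTransversal G (fixedPoints σ)) :
    (B.submatrix (Subtype.val : {v // σ v ≠ v} → V) Subtype.val).det ≠ 0 := by
  have hprod : ∀ τ : Perm {v // σ v ≠ v},
      ∏ i, B.submatrix Subtype.val Subtype.val (τ i) i ≠ 0 ↔ ∀ i, G.Adj i.1 (τ i).1 := fun τ => by
    simp only [Finset.prod_ne_zero_iff, Finset.mem_univ, true_imp_iff, Matrix.submatrix_apply, hBG,
      G.adj_comm]
  rw [det_eq_sum_involutions_of_charTwo (hB.submatrix _),
    Finset.sum_eq_single_of_mem (σ.subtypePerm fun _ => σ.injective.ne_iff)]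
  · exact (hprod _).2 fun i => hσ.2 i i.2
  · exact Finset.mem_filter.2 ⟨Finset.mem_univ _, (hσ.subtypePerm fun _ => σ.injective.ne_iff).1⟩
  · intro τ hτ hne
    by_contra h
    exact hne (hσ.eq_subtypePerm_of_adj htrans (Finset.mem_filter.1 hτ).2 ((hprod τ).1 h))

variable {R F K : Type*} [CommRing R] [CommRing F] [IsDomain F] [CharP F 2]
  [CommRing K] [IsDomain K]

theorem IsMatchingPerm.ncard_moved_le_rank {σ : Perm V} (f : R →+* K) (hf : Injective f)
    (g : R →+* F) {A : Matrix V V R} (hA : (A.map g).IsSymm)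
    (hAG : ∀ u v, g (A u v) ≠ 0 ↔ G.Adj u v) (hσ : IsMatchingPerm G σ)
    (htrans : IsEvenCycleTransversal G (fixedPoints σ)) :
    {v | σ v ≠ v}.ncard ≤ (A.map f).rank := by
  let A' : Matrix {v // σ v ≠ v} {v // σ v ≠ v} R := A.submatrix Subtype.val Subtype.val
  have hg : g A'.det ≠ 0 := by
    rw [RingHom.map_det]
    exact hσ.det_submatrix_ne_zero hA hAG htrans
  have hdet : (f.mapMatrix A').det ≠ 0 := by
    rw [← RingHom.map_det, map_ne_zero_iff f hf]
    exact fun h => hg (by rw [h, map_zero])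
  calc {v | σ v ≠ v}.ncard = Fintype.card {v // σ v ≠ v} :=
      (Nat.card_coe_set_eq _).symm.trans Nat.card_eq_fintype_card
    _ = (f.mapMatrix A').rank := (Matrix.rank_of_det_ne_zero hdet).symm
    _ ≤ (A.map f).rank := Matrix.rank_submatrix_le (A.map f) Subtype.val Subtype.val

theorem two_mul_matchingNumber_le_rank_add (f : R →+* K) (hf : Injective f) (g : R →+* F)
    {A : Matrix V V R} (hA : (A.map g).IsSymm) (hAG : ∀ u v, g (A u v) ≠ 0 ↔ G.Adj u v)
    {T : Set V} (hT : IsEvenCycleTransversal G T) :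
    2 * matchingNumber G ≤ (A.map f).rank + 2 * T.ncard := by
  obtain ⟨N, hN, hcard⟩ := exists_isMatching_ncard_edgeSet_eq_matchingNumber G
  obtain ⟨σ, hσ, hmoved⟩ := exists_isMatchingPerm_moved_eq_verts hN
  obtain ⟨τ, hτ, hTτ, hle⟩ := hσ.exists_fixing T
  calc 2 * matchingNumber G = {v | σ v ≠ v}.ncard := by
        rw [hmoved, ncard_verts_eq_two_mul_ncard_edgeSet hN, hcard]
    _ ≤ {v | τ v ≠ v}.ncard + 2 * T.ncard := hle
    _ ≤ (A.map f).rank + 2 * T.ncard :=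
      Nat.add_le_add_right (hτ.ncard_moved_le_rank f hf g hA hAG (hT.mono hTτ)) _

theorem hRank_ge_twice_matching_sub_twice_evenCycles_general (f : R →+* K) (hf : Injective f)
    (g : R →+* F) {A : Matrix V V R} (hA : (A.map g).IsSymm)
    (hAG : ∀ u v, g (A u v) ≠ 0 ↔ G.Adj u v) :
    2 * (matchingNumber G : ℤ) - 2 * (evenCycleCount G : ℤ) ≤ ((A.map f).rank : ℤ) := by
  obtain ⟨T, hT, hTκ⟩ := exists_isEvenCycleTransversal_ncard_le G
  have := two_mul_matchingNumber_le_rank_add f hf g hA hAG hT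
  lia

end Rank

/-- Reduction of the Gaussian integers modulo the prime `1 + i`, which sends `i` to `1`. -/
def gaussianIntModOnePlusI : GaussianInt →+* ZMod 2 :=
  Zsqrtd.lift ⟨1, by decide⟩

namespace MixedGraph

/-- The Hermitian adjacency matrix of a mixed graph with entries in `ℤ[i]`, so that it can be
reduced modulo `1 + i`. -/
noncomputable def gaussianMatrix (M : MixedGraph V) : Matrix V V GaussianInt := fun u v =>
  if M.arc u v then ⟨0, 1⟩
  else if M.arc v u then ⟨0, -1⟩
  else if M.graph.Adj u v then 1 else 0

theorem map_toComplex_gaussianMatrix [Fintype V] [DecidableEq V] (M : MixedGraph V) :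
    M.gaussianMatrix.map GaussianInt.toComplex = M.hMatrix := by
  ext u v
  simp only [Matrix.map_apply, gaussianMatrix, hMatrix]
  split_ifs <;> simp [GaussianInt.toComplex_def]

theorem map_gaussianIntModOnePlusI_gaussianMatrix (M : MixedGraph V) :
    M.gaussianMatrix.map gaussianIntModOnePlusI = M.graph.adjMatrix (ZMod 2) := by
  have hI : gaussianIntModOnePlusI ⟨0, 1⟩ = 1 := by decide
  have hnegI : gaussianIntModOnePlusI ⟨0, -1⟩ = 1 := by decide
  ext u v
  simp only [Matrix.map_apply, gaussianMatrix, SimpleGraph.adjMatrix_apply]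
  split_ifs with huv hadj hvu hadj
  · exact hI
  · exact absurd (M.arc_adj u v huv) hadj
  · exact hnegI
  · exact absurd (M.arc_adj v u hvu).symm hadj
  · exact map_one _
  · exact map_zero _

end MixedGraph

/-- For any mixed graph G̃,  r(G̃) ≥ 2m(G) − 2κ(G). -/
theorem hRank_ge_twice_matching_sub_twice_evenCycles
    {V : Type u} [Fintype V] [DecidableEq V] (M : MixedGraph V) :
    2 * (matchingNumber M.graph : ℤ) - 2 * (evenCycleCount M.graph : ℤ) ≤ (M.hRank : ℤ) := by
  rw [MixedGraph.hRank, ← M.map_toComplex_gaussianMatrix]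
  have hmod := M.map_gaussianIntModOnePlusI_gaussianMatrix
  exact hRank_ge_twice_matching_sub_twice_evenCycles_general GaussianInt.toComplex
    GaussianInt.toComplex_injective gaussianIntModOnePlusI
    (by rw [hmod]; exact M.graph.isSymm_adjMatrix) fun u v => by
      rw [← Matrix.map_apply (f := gaussianIntModOnePlusI), hmod]; simp

end MixedPaper
end

section
/- Let G~ be a mixed graph with underlying graph G. Then r(G~) ≤ 2m*(G), i.e., the H-rank of a mixed graph is at most twice the fractional matching number of its underlying graph. -/
open scoped Classical

namespace MixedPaper

universe u

variable {V : Type u}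

/-!
A nonzero minor of order `r(G̃)` of the Hermitian adjacency matrix has a nonzero term in its
Leibniz expansion. That term selects `r(G̃)` edges of `G`, with no two entries in the same row or
in the same column; since a vertex labels one row and one column, it lies on at most two of the
selected edges, counted with multiplicity. Giving each selected edge weight `1/2` therefore defines
a fractional matching of total weight `r(G̃)/2`.
-/

section NonzeroTransversal

open scoped Matrix

variable {m n K : Type*} [Field K]

theorem exists_embedding_linearIndependent_col [Fintype n] (A : Matrix m n K) {r : ℕ}
    (hr : r ≤ A.rank) : ∃ p : Fin r ↪ n, LinearIndependent K (A.col ∘ p) := by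
  rw [Matrix.rank_eq_finrank_span_cols] at hr
  have := Module.Finite.span_of_finite K (Set.finite_range A.col)
  obtain ⟨c, c_mem, -, c_indep⟩ :=
    Submodule.exists_fun_fin_finrank_span_eq K (Set.range A.col)
  choose p hp using c_mem
  have p_indep : LinearIndependent K (A.col ∘ p) := by rwa [show A.col ∘ p = c from funext hp]
  exact ⟨(Fin.castLEEmb hr).trans ⟨p, p_indep.injective.of_comp⟩,
    p_indep.comp _ (Fin.castLE_injective hr)⟩

theorem exists_embedding_det_submatrix_ne_zero [Finite m] [Fintype n] (A : Matrix m n K) {r : ℕ}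
    (hr : r ≤ A.rank) : ∃ (q : Fin r ↪ m) (p : Fin r ↪ n), (A.submatrix q p).det ≠ 0 := by
  have := Fintype.ofFinite m
  obtain ⟨p, p_indep⟩ := exists_embedding_linearIndependent_col A hr
  have rank_eq : (A.submatrix id p)ᵀ.rank = r := by
    simpa only [Fintype.card_fin] using
      LinearIndependent.rank_matrix (M := (A.submatrix id p)ᵀ) p_indep
  obtain ⟨q, q_indep⟩ := exists_embedding_linearIndependent_col (A.submatrix id p)ᵀ rank_eq.ge
  have row_indep : LinearIndependent K (A.submatrix q p).row := q_indep
  exact ⟨q, p, ((Matrix.isUnit_iff_isUnit_det _).mp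
    (Matrix.linearIndependent_rows_iff_isUnit.mp row_indep)).ne_zero⟩

theorem exists_perm_forall_ne_zero_of_det_ne_zero {R : Type*} [CommRing R] [Fintype n]
    [DecidableEq n] {A : Matrix n n R} (hA : A.det ≠ 0) :
    ∃ σ : Equiv.Perm n, ∀ i, A (σ i) i ≠ 0 := by
  rw [Matrix.det_apply] at hA
  obtain ⟨σ, -, term_ne⟩ := Finset.exists_ne_zero_of_sum_ne_zero hA
  refine ⟨σ, fun i hi => term_ne ?_⟩
  have prod_eq_zero : ∏ j, A (σ j) j = 0 := Finset.prod_eq_zero (Finset.mem_univ i) hi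
  rw [prod_eq_zero, smul_zero]

theorem exists_embedding_forall_apply_ne_zero [Finite m] [Fintype n] (A : Matrix m n K) :
    ∃ (q : Fin A.rank ↪ m) (p : Fin A.rank ↪ n), ∀ i, A (q i) (p i) ≠ 0 := by
  obtain ⟨q, p, det_ne⟩ := exists_embedding_det_submatrix_ne_zero A le_rfl
  obtain ⟨σ, hσ⟩ := exists_perm_forall_ne_zero_of_det_ne_zero det_ne
  exact ⟨σ.toEmbedding.trans q, p, hσ⟩

end NonzeroTransversal

section UniformWeight

variable {ι α : Type*} [Fintype ι] [DecidableEq α]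

/-- The weight function of a finite family in which each member carries weight `1 / k`; a value
attained several times collects the weight of all its occurrences. It turns a family of edges with
at most `k` members at each vertex into a fractional matching. For `k = 0` it is identically `0`. -/
noncomputable def uniformWeight (k : ℕ) (e : ι → α) (x : α) : ℝ :=
  ({i | e i = x} : Finset ι).card / k

theorem sum_uniformWeight (k : ℕ) (e : ι → α) (s : Finset α) :
    ∑ x ∈ s, uniformWeight k e x = ({i | e i ∈ s} : Finset ι).card / k := by
  simp only [uniformWeight, ← Finset.sum_div, ← Nat.cast_sum,
    Finset.sum_card_fiberwise_eq_card_filter]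

end UniformWeight

section FractionalMatching

variable [Fintype V] [DecidableEq V] {G : SimpleGraph V}

namespace IsFracMatching

variable {f : Sym2 V → ℝ}

theorem of_nonneg (nonneg : ∀ e, 0 ≤ f e) (eq_zero : ∀ e ∉ G.edgeSet, f e = 0)
    (sum_le : ∀ v, ∑ e with v ∈ e, f e ≤ 1) : IsFracMatching G f := by
  refine ⟨fun e _ => ⟨nonneg e, ?_⟩, eq_zero, sum_le⟩
  calc f e ≤ ∑ e' with e.out.1 ∈ e', f e' :=
        Finset.single_le_sum (fun e' _ => nonneg e') (by simp [Sym2.out_fst_mem])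
    _ ≤ 1 := sum_le _

theorem le_one (hf : IsFracMatching G f) (e : Sym2 V) : f e ≤ 1 := by
  by_cases he : e ∈ G.edgeSet
  · exact (hf.1 e he).2
  · exact (hf.2.1 e he).trans_le zero_le_one

theorem sum_le_fracMatchingNumber (hf : IsFracMatching G f) :
    ∑ e, f e ≤ fracMatchingNumber G := by
  refine le_csSup ⟨(Fintype.card (Sym2 V) : ℝ), ?_⟩ ⟨f, hf, rfl⟩
  rintro _ ⟨g, hg, rfl⟩
  simpa only [Finset.card_univ, nsmul_eq_mul, mul_one] using
    Finset.sum_le_card_nsmul Finset.univ g 1 fun e _ => hg.le_one e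

end IsFracMatching

variable {ι : Type*} [Fintype ι]

theorem isFracMatching_uniformWeight {k : ℕ} {e : ι → Sym2 V} (he : ∀ i, e i ∈ G.edgeSet)
    (card_le : ∀ v, ({i | v ∈ e i} : Finset ι).card ≤ k) :
    IsFracMatching G (uniformWeight k e) := by
  refine .of_nonneg (fun x => by unfold uniformWeight; positivity) (fun x hx => ?_) fun v => ?_
  · have fiber_empty : ({i | e i = x} : Finset ι) = ∅ :=
      Finset.filter_eq_empty_iff.mpr fun i _ h => hx (h ▸ he i)
    simp only [uniformWeight, fiber_empty, Finset.card_empty, Nat.cast_zero, zero_div]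
  · rw [sum_uniformWeight]
    simp only [Finset.mem_filter, Finset.mem_univ, true_and]
    exact div_le_one_of_le₀ (Nat.cast_le.mpr (card_le v)) k.cast_nonneg

theorem card_le_mul_fracMatchingNumber {k : ℕ} {e : ι → Sym2 V} (he : ∀ i, e i ∈ G.edgeSet)
    (card_le : ∀ v, ({i | v ∈ e i} : Finset ι).card ≤ k) :
    (Fintype.card ι : ℝ) ≤ k * fracMatchingNumber G := by
  rcases k.eq_zero_or_pos with rfl | hk
  · have : IsEmpty ι := ⟨fun i => Finset.notMem_empty i <| by
      rw [← Finset.card_eq_zero.mp (Nat.le_zero.mp (card_le (e i).out.1))]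
      simp [Sym2.out_fst_mem]⟩
    simp
  · rw [← div_le_iff₀' (by exact_mod_cast hk)]
    calc (Fintype.card ι : ℝ) / k = ∑ x, uniformWeight k e x := by simp [sum_uniformWeight]
      _ ≤ fracMatchingNumber G :=
        (isFracMatching_uniformWeight he card_le).sum_le_fracMatchingNumber

end FractionalMatching

theorem card_filter_mem_sym2_le_two {ι α : Type*} [Fintype ι] [DecidableEq α]
    (q p : ι ↪ α) (a : α) :
    ({i | a ∈ s(q i, p i)} : Finset ι).card ≤ 2 := by
  have fiber_card_le (f : ι ↪ α) : ({i | f i = a} : Finset ι).card ≤ 1 :=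
    Finset.card_le_one.mpr fun i hi j hj => f.injective (by grind)
  calc ({i | a ∈ s(q i, p i)} : Finset ι).card
      = (({i | q i = a} : Finset ι) ∪ ({i | p i = a} : Finset ι)).card := by
        simp only [Sym2.mem_iff, eq_comm (a := a), Finset.filter_or]
    _ ≤ ({i | q i = a} : Finset ι).card + ({i | p i = a} : Finset ι).card :=
        Finset.card_union_le _ _
    _ ≤ 2 := Nat.add_le_add (fiber_card_le q) (fiber_card_le p)

theorem MixedGraph.adj_of_hMatrix_ne_zero [Fintype V] [DecidableEq V] (M : MixedGraph V) {u v : V}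
    (h : M.hMatrix u v ≠ 0) : M.graph.Adj u v := by
  contrapose! h
  have not_arc : ¬ M.arc u v := fun huv => h (M.arc_adj u v huv)
  have not_arc_symm : ¬ M.arc v u := fun hvu => h (M.arc_adj v u hvu).symm
  rw [MixedGraph.hMatrix, if_neg not_arc, if_neg not_arc_symm, if_neg h]

theorem hRank_le_twice_fracMatchingNumber_general {K : Type*} [Field K] [Fintype V] [DecidableEq V]
    (G : SimpleGraph V) (A : Matrix V V K) (hA : ∀ u v, A u v ≠ 0 → G.Adj u v) :
    (A.rank : ℝ) ≤ 2 * fracMatchingNumber G := by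
  obtain ⟨q, p, entry_ne⟩ := exists_embedding_forall_apply_ne_zero A
  have edges : ∀ i, s(q i, p i) ∈ G.edgeSet := fun i => hA _ _ (entry_ne i)
  simpa using card_le_mul_fracMatchingNumber edges (card_filter_mem_sym2_le_two q p)

/-- For any mixed graph G̃,  r(G̃) ≤ 2m*(G). -/
theorem hRank_le_twice_fracMatchingNumber
    {V : Type u} [Fintype V] [DecidableEq V] (M : MixedGraph V) :
    (M.hRank : ℝ) ≤ 2 * fracMatchingNumber M.graph := by
  exact hRank_le_twice_fracMatchingNumber_general M.graph M.hMatrix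
    fun _ _ => M.adj_of_hMatrix_ne_zero

end MixedPaper
end
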